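/- Let X ⊆ P² be a k-configuration of type (d₁,…,d_s) with s ≥ 2, defined using subsets X₁,…,X_s and lines L₁,…,L_s. Suppose there are indices 0 ≤ j < i ≤ s−1 such that |L_{s−k} ∩ X| = d_s for k = 0,…,j, |L_{s−k} ∩ X| < d_s for k = j+1,…,i−1, and |L_{s−i} ∩ X| = d_s. Set T = L_{s−i} ∩ (X_{s−j−1} ∪ X_{s−j−2} ∪ ⋯ ∪ X_{s−i+1}). Then X is also a k-configuration of type (d₁,…,d_s) defined using the subsets X'₁,…,X'_s and lines L'₁,…,L'_s given by: X'_k = X_k and L'_k = L_k for k = 1,…,s−i−1; X'_k = X_{k+1} \ T and L'_k = L_{k+1} for k = s−i,…,s−j−2; X'_{s−j−1} = X_{s−i} ∪ T and L'_{s−j−1} = L_{s−i}; and X'_k = X_k and L'_k = L_k for k = s−j,…,s. -/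

import Mathlib

/-- The projective plane over a field `K`, as the projectivization of `K³`. -/
abbrev P2 (K : Type) [Field K] := Projectivization K (Fin 3 → K)

/-- A line in `P2 K`: a 2-dimensional linear subspace of `K³`. -/
structure ProjLine (K : Type) [Field K] where
  toSubmodule : Submodule K (Fin 3 → K)
  finrank_eq_two : Module.finrank K toSubmodule = 2

/-- The set of points of `P2 K` lying on a line. -/
def ProjLine.points {K : Type} [Field K] (L : ProjLine K) : Set (P2 K) :=
  {p | p.submodule ≤ L.toSubmodule}

/-- The homogeneous prime ideal of a point of `P2 K`: the ideal generated by
the linear forms vanishing at the point. -/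
noncomputable def pointIdeal {K : Type} [Field K] (p : P2 K) :
    Ideal (MvPolynomial (Fin 3) K) :=
  Ideal.span {f | f.IsHomogeneous 1 ∧ MvPolynomial.eval p.rep f = 0}

/-- The defining ideal `I_{mX} = ⋂_{P ∈ X} I_P^m` of the fat point scheme `mX`. -/
noncomputable def fatIdeal {K : Type} [Field K] (X : Set (P2 K)) (m : ℕ) :
    Ideal (MvPolynomial (Fin 3) K) :=
  ⨅ p ∈ X, (pointIdeal p) ^ m

/-- The Hilbert function of `R/I`: `H(t) = dim_K R_t - dim_K I_t`. -/
noncomputable def hilb {K : Type} [Field K] (I : Ideal (MvPolynomial (Fin 3) K)) (t : ℕ) : ℕ :=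
  Module.finrank K ↥(MvPolynomial.homogeneousSubmodule (Fin 3) K t) -
    Module.finrank K ↥(Submodule.restrictScalars K (I : Submodule (MvPolynomial (Fin 3) K) (MvPolynomial (Fin 3) K)) ⊓ MvPolynomial.homogeneousSubmodule (Fin 3) K t)

/-- The Hilbert function extended to `ℤ`, with `H(t) = 0` for `t < 0`. -/
noncomputable def hilbZ {K : Type} [Field K] (I : Ideal (MvPolynomial (Fin 3) K)) (t : ℤ) : ℤ :=
  if t < 0 then 0 else hilb I t.toNat

/-- The first difference `ΔH(t) = H(t) - H(t-1)` of the Hilbert function. -/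
noncomputable def deltaHilb {K : Type} [Field K] (I : Ideal (MvPolynomial (Fin 3) K)) (t : ℤ) : ℤ :=
  hilbZ I t - hilbZ I (t - 1)

/-- `X` is a k-configuration of type `(d 0, …, d (s-1))` defined using the subsets
`Xs 0, …, Xs (s-1)` and the (distinct) lines `Ls 0, …, Ls (s-1)`. -/
structure IsKConfig {K : Type} [Field K] {s : ℕ} (X : Set (P2 K)) (d : Fin s → ℕ)
    (Xs : Fin s → Set (P2 K)) (Ls : Fin s → ProjLine K) : Prop where
  one_le : ∀ i, 1 ≤ d i
  strictMono : StrictMono d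
  lines_distinct : Function.Injective Ls
  union_eq : X = ⋃ i, Xs i
  card_eq : ∀ i, (Xs i).ncard = d i
  subset_line : ∀ i, Xs i ⊆ (Ls i).points
  not_mem : ∀ i j : Fin s, j < i → ∀ p ∈ Xs j, p ∉ (Ls i).points

/-- Two distinct lines share at most one point. -/
lemma ProjLine.points_inter_unique {K : Type} [Field K] {L M : ProjLine K} (h : L ≠ M)
    {p q : P2 K} (hpL : p ∈ L.points) (hpM : p ∈ M.points)
    (hqL : q ∈ L.points) (hqM : q ∈ M.points) : p = q := by
  by_contra hne
  apply h
  have key : ∀ N : ProjLine K, p ∈ N.points → q ∈ N.points →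
      p.submodule ⊔ q.submodule = N.toSubmodule := by
    intro N hp hq
    have hle : p.submodule ⊔ q.submodule ≤ N.toSubmodule := sup_le hp hq
    apply Submodule.eq_of_le_of_finrank_le hle
    rw [N.finrank_eq_two]
    have hlt : p.submodule < p.submodule ⊔ q.submodule := by
      refine lt_of_le_of_ne le_sup_left ?_
      intro heq
      have hqp : q.submodule ≤ p.submodule := by
        rw [heq]; exact le_sup_right
      have : q.submodule = p.submodule :=
        Submodule.eq_of_le_of_finrank_eq hqp (by
          rw [Projectivization.finrank_submodule, Projectivization.finrank_submodule])
      exact hne (Projectivization.submodule_injective this).symm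
    have := Submodule.finrank_lt_finrank_of_lt hlt
    rw [Projectivization.finrank_submodule] at this
    omega
  have := (key L hpL hqL).symm.trans (key M hpM hqM)
  cases L; cases M; simp_all

lemma strictMono_gap {s : ℕ} {d : Fin s → ℕ} (hd : StrictMono d) :
    ∀ (n : ℕ) (a b : Fin s), b.1 = a.1 + n → d a + n ≤ d b := by
  intro n
  induction n with
  | zero =>
    intro a b h
    have : a = b := Fin.ext (by omega)
    simp [this]
  | succ n ih =>
    intro a b h
    have h1 := ih a ⟨a.1 + n, by omega⟩ rfl
    have h2 : d ⟨a.1 + n, by omega⟩ < d b := hd (by rw [Fin.lt_def]; simp; omega)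
    omega

section
variable {K : Type} [Field K] {s : ℕ} {X : Set (P2 K)} {d : Fin s → ℕ}
  {Xs : Fin s → Set (P2 K)} {Ls : Fin s → ProjLine K}

lemma IsKConfig.finite (hX : IsKConfig X d Xs Ls) (a : Fin s) : (Xs a).Finite := by
  apply Set.finite_of_ncard_pos
  rw [hX.card_eq]; exact hX.one_le a

lemma IsKConfig.idx_unique (hX : IsKConfig X d Xs Ls) {a b : Fin s} {p : P2 K}
    (ha : p ∈ Xs a) (hb : p ∈ Xs b) : a = b := by
  rcases lt_trichotomy a b with h | h | h
  · exact absurd (hX.subset_line b hb) (hX.not_mem b a h p ha)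
  · exact h
  · exact absurd (hX.subset_line a ha) (hX.not_mem a b h p hb)

lemma IsKConfig.count (hX : IsKConfig X d Xs Ls) (c : Fin s) (S : Set (Fin s))
    (hS : ∀ a, c < a → (∃ p ∈ Xs a, p ∈ (Ls c).points) → a ∈ S) (hSc : ∀ a ∈ S, c < a) :
    (X ∩ (Ls c).points).ncard ≤ d c + S.ncard := by
  classical
  have hC : ∀ p ∈ (X ∩ (Ls c).points) \ Xs c, ∃ a ∈ S, p ∈ Xs a := by
    rintro p ⟨⟨hpX, hpL⟩, hpc⟩
    rw [hX.union_eq, Set.mem_iUnion] at hpX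
    obtain ⟨a, ha⟩ := hpX
    rcases lt_trichotomy a c with h | h | h
    · exact absurd hpL (hX.not_mem c a h p ha)
    · subst h; exact absurd ha hpc
    · exact ⟨a, hS a h ⟨p, ha, hpL⟩, ha⟩
  have : Nonempty (Fin s) := ⟨c⟩
  choose! f hf using hC
  have h1 : ((X ∩ (Ls c).points) \ Xs c).ncard ≤ S.ncard := by
    refine Set.ncard_le_ncard_of_injOn f (fun p hp => (hf p hp).1) ?_ (Set.toFinite S)
    intro p hp q hq hpq
    have hlt := hSc _ (hf p hp).1
    have hne : Ls c ≠ Ls (f p) := fun h => hlt.ne (hX.lines_distinct h)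
    exact ProjLine.points_inter_unique hne hp.1.2 (hX.subset_line _ (hf p hp).2) hq.1.2
      (hX.subset_line _ (hpq ▸ (hf q hq).2))
  have h2 := Set.ncard_le_ncard_sdiff_add_ncard (X ∩ (Ls c).points) (Xs c) (hX.finite c)
  rw [hX.card_eq] at h2
  omega

/-- The relabelling, with zero-based indices: `c` is moved to position `e`. -/
lemma IsKConfig.exists_pts (hX : IsKConfig X d Xs Ls) (c m : Fin s) (hm : m.1 + 1 = s)
    (hlow : (X ∩ (Ls c).points).ncard = d m) :
    (∀ a, c ≤ a → d a = d c + (a.1 - c.1)) ∧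
    (∀ a, c < a → ∃ p ∈ Xs a, p ∈ (Ls c).points) := by
  have hcard : (Set.Ioi c).ncard = m.1 - c.1 := by
    rw [← Finset.coe_Ioi, Set.ncard_coe_finset, Fin.card_Ioi]; omega
  have hcm := c.2
  constructor
  · intro a ha
    have ha' : c.1 ≤ a.1 := ha
    have h1 := hX.count c (Set.Ioi c) (fun a h _ => h) (fun a h => h)
    rw [hcard, hlow] at h1
    have := strictMono_gap hX.strictMono (a.1 - c.1) c a (by omega)
    have := strictMono_gap hX.strictMono (m.1 - a.1) a m (by omega)
    have := a.2
    omega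
  · intro a ha
    by_contra hno
    have ha' : c.1 < a.1 := ha
    have h1 := hX.count c (Set.Ioi c \ {a}) (fun b h hb => ⟨h, by
      rintro rfl; exact hno hb⟩) (fun a h => h.1)
    rw [hlow, Set.ncard_sdiff_singleton_of_mem (show a ∈ Set.Ioi c from ha), hcard] at h1
    have := strictMono_gap hX.strictMono (m.1 - c.1) c m (by omega)
    have := a.2
    omega

lemma IsKConfig.relabel (hX : IsKConfig X d Xs Ls) (c e m : Fin s) (hm : m.1 + 1 = s)
    (hce : c ≤ e) (hlow : (X ∩ (Ls c).points).ncard = d m) (T : Set (P2 K))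
    (hT : ∀ p, p ∈ T ↔ p ∈ (Ls c).points ∧ ∃ t, c < t ∧ t ≤ e ∧ p ∈ Xs t)
    (Xs' : Fin s → Set (P2 K)) (σ : Fin s → Fin s)
    (h1 : ∀ a, (a < c ∨ e < a) → Xs' a = Xs a ∧ σ a = a)
    (h2 : ∀ a, c ≤ a → a < e → Xs' a = Xs (σ a) \ T ∧ (σ a).1 = a.1 + 1)
    (h3 : Xs' e = Xs c ∪ T ∧ σ e = c) :
    IsKConfig X d Xs' (Ls ∘ σ) := by
  obtain ⟨hd, hp⟩ := hX.exists_pts c m hm hlow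
  choose! p hpX hpL using hp
  have hpu : ∀ a, c < a → ∀ q ∈ Xs a, q ∈ (Ls c).points → q = p a := by
    intro a ha q hq hqL
    have hne : Ls c ≠ Ls a := fun h => ha.ne (hX.lines_distinct h)
    exact ProjLine.points_inter_unique hne hqL (hX.subset_line _ hq) (hpL a ha)
      (hX.subset_line _ (hpX a ha))
  have hTim : T = p '' Set.Ioc c e := by
    ext q
    rw [hT]
    constructor
    · rintro ⟨hq, t, hct, hte, hqt⟩
      exact ⟨t, ⟨hct, hte⟩, (hpu t hct q hqt hq).symm⟩
    · rintro ⟨t, ⟨hct, hte⟩, rfl⟩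
      exact ⟨hpL t hct, t, hct, hte, hpX t hct⟩
  have hTcard : T.ncard = e.1 - c.1 := by
    rw [hTim, Set.ncard_image_of_injOn, ← Finset.coe_Ioc, Set.ncard_coe_finset, Fin.card_Ioc]
    intro a ha b hb hab
    exact hX.idx_unique (hpX a ha.1) (hab ▸ hpX b hb.1)
  have hTfin : T.Finite := by rw [hTim]; exact (Set.toFinite _).image _
  have cases3 : ∀ a : Fin s, (a < c ∨ e < a) ∨ (c ≤ a ∧ a < e) ∨ a = e := by
    intro a
    by_cases hac : a < c
    · exact Or.inl (Or.inl hac)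
    · rcases lt_trichotomy a e with h | h | h
      · exact Or.inr (Or.inl ⟨not_lt.mp hac, h⟩)
      · exact Or.inr (Or.inr h)
      · exact Or.inl (Or.inr h)
  refine ⟨hX.one_le, hX.strictMono, hX.lines_distinct.comp ?_, ?_, ?_, ?_, ?_⟩
  · intro a b hab
    have hce' : c.1 ≤ e.1 := hce
    rcases cases3 a with ha | ha | ha <;> rcases cases3 b with hb | hb | hb
    all_goals
      first
      | have ea := congrArg Fin.val (h1 a ha).2
      | have ea := (h2 a ha.1 ha.2).2
      | (have ea := congrArg Fin.val h3.2; subst ha)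
      first
      | have eb := congrArg Fin.val (h1 b hb).2
      | have eb := (h2 b hb.1 hb.2).2
      | (have eb := congrArg Fin.val h3.2; subst hb)
    all_goals
      have hab' := congrArg Fin.val hab
      simp only [Fin.lt_def, Fin.le_def] at * <;> exact Fin.ext (by omega)
  · ext q
    rw [hX.union_eq]
    simp only [Set.mem_iUnion]
    constructor
    · rintro ⟨a, ha⟩
      by_cases hqT : q ∈ T
      · exact ⟨e, by rw [h3.1]; exact Or.inr hqT⟩
      by_cases hac : a = c
      · subst hac
        exact ⟨e, by rw [h3.1]; exact Or.inl ha⟩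
      by_cases hac2 : a < c ∨ e < a
      · exact ⟨a, by rw [(h1 a hac2).1]; exact ha⟩
      have hac3 : c.1 < a.1 ∧ a.1 ≤ e.1 := by
        simp only [Fin.lt_def, Fin.ext_iff] at hac hac2
        omega
      have hb := h2 ⟨a.1 - 1, by omega⟩ (by rw [Fin.le_def]; simp; omega)
        (by rw [Fin.lt_def]; simp; omega)
      refine ⟨⟨a.1 - 1, by omega⟩, ?_⟩
      rw [hb.1]
      have : σ ⟨a.1 - 1, by omega⟩ = a := Fin.ext (by rw [hb.2]; simp; omega)
      rw [this]
      exact ⟨ha, hqT⟩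
    · rintro ⟨a, ha⟩
      rcases cases3 a with h | h | h
      · rw [(h1 a h).1] at ha; exact ⟨a, ha⟩
      · rw [(h2 a h.1 h.2).1] at ha; exact ⟨_, ha.1⟩
      · subst h
        rw [h3.1] at ha
        rcases ha with ha | ha
        · exact ⟨_, ha⟩
        · obtain ⟨_, t, _, _, ht⟩ := (hT q).1 ha
          exact ⟨t, ht⟩
  · intro a
    rcases cases3 a with h | h | h
    · rw [(h1 a h).1, hX.card_eq]
    · obtain ⟨e1, e2⟩ := h2 a h.1 h.2
      have hcs : c < σ a := by
        have := h.1
        rw [Fin.le_def] at this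
        rw [Fin.lt_def]; omega
      have hse : σ a ≤ e := by
        have := h.2
        rw [Fin.lt_def] at this
        rw [Fin.le_def]; omega
      have : Xs (σ a) \ T = Xs (σ a) \ {p (σ a)} := by
        ext q
        simp only [Set.mem_sdiff, Set.mem_singleton_iff]
        refine and_congr_right fun hq => not_congr ⟨fun hqT => ?_, fun hq' => ?_⟩
        · exact hpu _ hcs q hq ((hT q).1 hqT).1
        · subst hq'
          exact (hT _).2 ⟨hpL _ hcs, _, hcs, hse, hq⟩
      rw [e1, this, Set.ncard_sdiff_singleton_of_mem (hpX _ hcs), hX.card_eq,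
        hd _ hcs.le, hd _ h.1, e2]
      have := h.1
      rw [Fin.le_def] at this
      omega
    · subst h
      rw [h3.1, Set.ncard_union_eq _ (hX.finite c) hTfin, hX.card_eq, hTcard, hd _ hce]
      rw [Set.disjoint_left]
      intro q hq hqT
      obtain ⟨_, t, hct, _, ht⟩ := (hT q).1 hqT
      exact hct.ne (hX.idx_unique hq ht)
  · intro a
    rcases cases3 a with h | h | h
    · rw [Function.comp, (h1 a h).1, (h1 a h).2]; exact hX.subset_line a
    · rw [Function.comp, (h2 a h.1 h.2).1]
      exact Set.sdiff_subset.trans (hX.subset_line _)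
    · subst h
      rw [Function.comp, h3.1, h3.2]
      exact Set.union_subset (hX.subset_line c) fun q hq => ((hT q).1 hq).1
  · intro a b hba q hq
    rw [Function.comp]
    have hce' : c.1 ≤ e.1 := hce
    rcases cases3 b with hb | hb | hb
    · rw [(h1 b hb).1] at hq
      apply hX.not_mem _ b _ q hq
      rcases cases3 a with ha | ha | ha
      · rw [(h1 a ha).2]; exact hba
      · have := (h2 a ha.1 ha.2).2
        rw [Fin.lt_def] at *; omega
      · subst ha; rw [h3.2]
        simp only [Fin.lt_def] at *; omega
    · obtain ⟨e1, e2⟩ := h2 b hb.1 hb.2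
      rw [e1] at hq
      have hb1 := hb.1
      have hb2 := hb.2
      rcases cases3 a with ha | ha | ha
      · apply hX.not_mem _ _ _ q hq.1
        rw [(h1 a ha).2]
        simp only [Fin.lt_def, Fin.le_def] at *; omega
      · apply hX.not_mem _ _ _ q hq.1
        have := (h2 a ha.1 ha.2).2
        simp only [Fin.lt_def, Fin.le_def] at *; omega
      · subst ha; rw [h3.2]
        intro hqL
        refine hq.2 ((hT q).2 ⟨hqL, σ b, ?_, ?_, hq.1⟩)
        · simp only [Fin.lt_def, Fin.le_def] at *; omega
        · simp only [Fin.lt_def, Fin.le_def] at *; omega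
    · subst hb
      have ha : a < c ∨ b < a := Or.inr hba
      rw [(h1 a ha).2]
      rw [h3.1] at hq
      rcases hq with hq | hq
      · exact hX.not_mem _ _ (lt_of_le_of_lt hce hba) q hq
      · obtain ⟨_, t, _, hte, ht⟩ := (hT q).1 hq
        exact hX.not_mem _ _ (lt_of_le_of_lt hte hba) q ht

end

/-- **Lemma (relabelling).** Suppose `X` is a k-configuration of type
`(d₁,…,d_s)`, `s ≥ 2`, defined by subsets `X₁,…,X_s` and lines `L₁,…,L_s`,
with `|L_{s−k} ∩ X| = d_s` for `k = 0,…,j`, `|L_{s−k} ∩ X| < d_s` for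
`k = j+1,…,i−1`, and `|L_{s−i} ∩ X| = d_s`, where `0 ≤ j < i ≤ s−1`.  Set
`T = L_{s−i} ∩ (X_{s−j−1} ∪ ⋯ ∪ X_{s−i+1})`.  Then `X` is also a
k-configuration of the same type defined by the relabelled data `X'ₖ`, `L'ₖ`.
(Math index `k ∈ {1,…,s}` corresponds to `a : Fin s` via `k = a + 1`.) -/
theorem kconfig_relabel {K : Type} [Field K] [IsAlgClosed K] {s : ℕ} (hs : 2 ≤ s)
    (X : Set (P2 K)) (d : Fin s → ℕ) (Xs : Fin s → Set (P2 K)) (Ls : Fin s → ProjLine K)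
    (hX : IsKConfig X d Xs Ls)
    (ds : ℕ) (hds : ds = d ⟨s - 1, by omega⟩)
    (j i : ℕ) (hji : j < i) (his : i ≤ s - 1)
    (htop : ∀ k : ℕ, k ≤ j → (X ∩ (Ls ⟨s - 1 - k, by omega⟩).points).ncard = ds)
    (hmid : ∀ k : ℕ, j + 1 ≤ k → k ≤ i - 1 →
      (X ∩ (Ls ⟨s - 1 - k, by omega⟩).points).ncard < ds)
    (hlow : (X ∩ (Ls ⟨s - 1 - i, by omega⟩).points).ncard = ds)
    (T : Set (P2 K))
    (hT : T = (Ls ⟨s - 1 - i, by omega⟩).points ∩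
      {p : P2 K | ∃ t : Fin s, s - i + 1 ≤ t.1 + 1 ∧ t.1 + 1 ≤ s - j - 1 ∧ p ∈ Xs t}) :
    ∃ (Xs' : Fin s → Set (P2 K)) (Ls' : Fin s → ProjLine K),
      IsKConfig X d Xs' Ls' ∧
      (∀ a : Fin s, a.1 + 1 ≤ s - i - 1 → Xs' a = Xs a ∧ Ls' a = Ls a) ∧
      (∀ a b : Fin s, b.1 = a.1 + 1 → s - i ≤ a.1 + 1 → a.1 + 1 ≤ s - j - 2 →
        Xs' a = Xs b \ T ∧ Ls' a = Ls b) ∧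
      (∀ a c : Fin s, a.1 + 1 = s - j - 1 → c.1 + 1 = s - i →
        Xs' a = Xs c ∪ T ∧ Ls' a = Ls c) ∧
      (∀ a : Fin s, s - j ≤ a.1 + 1 → Xs' a = Xs a ∧ Ls' a = Ls a) := by
  classical
  set c : Fin s := ⟨s - 1 - i, by omega⟩ with hc
  set e : Fin s := ⟨s - 2 - j, by omega⟩ with he
  have hcv : c.1 = s - 1 - i := rfl
  have hev : e.1 = s - 2 - j := rfl
  let σ : Fin s → Fin s := fun a =>
    if h : c.1 ≤ a.1 ∧ a.1 < e.1 then ⟨a.1 + 1, by omega⟩ else if a = e then c else a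
  let Xs' : Fin s → Set (P2 K) := fun a =>
    if c.1 ≤ a.1 ∧ a.1 < e.1 then Xs (σ a) \ T else if a = e then Xs c ∪ T else Xs a
  have h1 : ∀ a, (a < c ∨ e < a) → Xs' a = Xs a ∧ σ a = a := by
    intro a ha
    simp only [Fin.lt_def] at ha
    have n1 : ¬ (c.1 ≤ a.1 ∧ a.1 < e.1) := by omega
    have n2 : a ≠ e := by
      rw [Ne, Fin.ext_iff]; omega
    exact ⟨by simp only [Xs', if_neg n1, if_neg n2], by simp only [σ, dif_neg n1, if_neg n2]⟩
  have h2 : ∀ a, c ≤ a → a < e → Xs' a = Xs (σ a) \ T ∧ (σ a).1 = a.1 + 1 := by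
    intro a ha hb
    have n1 : c.1 ≤ a.1 ∧ a.1 < e.1 := ⟨ha, hb⟩
    exact ⟨by simp only [Xs', if_pos n1], by simp only [σ, dif_pos n1]⟩
  have h3 : Xs' e = Xs c ∪ T ∧ σ e = c := by
    have n1 : ¬ (c.1 ≤ e.1 ∧ e.1 < e.1) := by omega
    exact ⟨by simp only [Xs', if_neg n1, if_true], by simp only [σ, dif_neg n1, if_true]⟩
  refine ⟨Xs', Ls ∘ σ, ?_, ?_, ?_, ?_, ?_⟩
  · refine hX.relabel c e ⟨s - 1, by omega⟩ (by simp; omega) (by rw [Fin.le_def]; omega)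
      (hlow.trans hds) T ?_ Xs' σ h1 h2 h3
    intro p
    rw [hT]
    simp only [Set.mem_inter_iff, Set.mem_setOf_eq, Fin.lt_def, Fin.le_def]
    refine and_congr_right fun _ => exists_congr fun t => ?_
    rw [← and_assoc, ← and_assoc]
    refine and_congr_left fun _ => ?_
    omega
  · intro a ha
    have h := h1 a (Or.inl (by rw [Fin.lt_def]; omega))
    exact ⟨h.1, congrArg Ls h.2⟩
  · intro a b hb ha1 ha2
    have h := h2 a (by rw [Fin.le_def]; omega) (by rw [Fin.lt_def]; omega)
    have hab : σ a = b := Fin.ext (by omega)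
    rw [hab] at h
    exact ⟨h.1, congrArg Ls hab⟩
  · intro a c' ha hc'
    have e1 : a = e := Fin.ext (by omega)
    have e2 : c' = c := Fin.ext (by omega)
    subst e1
    rw [e2]
    exact ⟨h3.1, congrArg Ls h3.2⟩
  · intro a ha
    have h := h1 a (Or.inr (by rw [Fin.lt_def]; omega))
    exact ⟨h.1, congrArg Ls h.2⟩
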